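/- arXiv:math/0202076 — 2 statements merged into one kernel-verified Lean document; each statement's English description precedes it below -/
import Mathlib

section
/- Let m ≥ n ≥ 1 and let ã ≥ a ≥ c ≥ d ≥ 0 be integers. Let w be the partition of length m with w_i = ã for 1 ≤ i ≤ n and w_i = a for n < i ≤ m, and let v be the partition of length n with v_1 = c + (n−1)d and v_i = c − d for 2 ≤ i ≤ n. Let λ be a partition of length at most m+n satisfying: λ_j + λ_{m+n+1−j} = ã + c for j = 1,…,n; λ_{n+j} = a for j = 1,…,m−n; λ_n ≥ ã; and λ_i − λ_{i+1} ≥ d for i = 1,…,n−1. Set λ_0 := ã + c. Then every Littlewood–Richardson tableau of shape λ∖w and weight v has the following labeling: for 1 ≤ i ≤ n, all λ_i − ã boxes in row i carry the symbol i; rows n+1,…,m contain no boxes; and for each 1 ≤ j ≤ n the symbol i occurs in row m+j exactly μ^i_j times, where μ^i_j = λ_{i−j} − λ_{i−j+1} for 2 ≤ j ≤ i ≤ n, μ^i_1 = λ_{i−1} − λ_i − d for 2 ≤ i ≤ n, μ^1_1 = λ_0 + (n−1)d − λ_1, and μ^i_j = 0 for i < j. -/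
/-- A partition of length at most `r`, presented as a function on positive
indices: weakly decreasing on indices `≥ 1` and vanishing beyond `r`. -/
def IsPartitionOfLength (r : ℕ) (lam : ℕ → ℕ) : Prop :=
  (∀ i, 1 ≤ i → lam (i + 1) ≤ lam i) ∧ ∀ i, r < i → lam i = 0

/-- The partition `a·1^k`: first `k` parts equal to `a`, the rest `0`. -/
def onesPart (a k : ℕ) : ℕ → ℕ := fun i => if 1 ≤ i ∧ i ≤ k then a else 0

/-- The box `(i, j)` (row `i ≥ 1`, column `j`) lies in the skew shape `λ ∖ μ`. -/
def InShape (lam mu : ℕ → ℕ) (p : ℕ × ℕ) : Prop :=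
  1 ≤ p.1 ∧ mu p.1 < p.2 ∧ p.2 ≤ lam p.1

/-- The set of boxes read before (and including) position `(i, j)` in the
reading word: boxes in rows above `i`, together with boxes of row `i` in
columns `≥ j` (the reading goes right to left along rows, top row first). -/
def ReadingPrefix (lam mu : ℕ → ℕ) (i j : ℕ) : Set (ℕ × ℕ) :=
  {p | InShape lam mu p ∧ (p.1 < i ∨ (p.1 = i ∧ j ≤ p.2))}

/-- A Littlewood–Richardson tableau of shape `λ ∖ μ` and weight `ν` with
symbols `1, …, s`: a filling of the boxes of `λ ∖ μ` (extended by `0` outside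
of the shape) which is weakly increasing along rows, strictly increasing down
columns, uses the symbol `k` exactly `ν k` times, and whose reading word is a
lattice permutation. -/
def IsLRTableau (lam mu nu : ℕ → ℕ) (s : ℕ) (T : ℕ × ℕ → ℕ) : Prop :=
  (∀ p, InShape lam mu p → 1 ≤ T p ∧ T p ≤ s) ∧
  (∀ p, ¬ InShape lam mu p → T p = 0) ∧
  (∀ i j, InShape lam mu (i, j) → InShape lam mu (i, j + 1) →
    T (i, j) ≤ T (i, j + 1)) ∧
  (∀ i j, InShape lam mu (i, j) → InShape lam mu (i + 1, j) →
    T (i, j) < T (i + 1, j)) ∧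
  (∀ k, 1 ≤ k → k ≤ s → {p | InShape lam mu p ∧ T p = k}.ncard = nu k) ∧
  (∀ i j k, 1 ≤ k →
    {p | p ∈ ReadingPrefix lam mu i j ∧ T p = k + 1}.ncard ≤
      {p | p ∈ ReadingPrefix lam mu i j ∧ T p = k}.ncard)

-- The Littlewood–Richardson coefficient `c^λ_{μν}` (with `ν` regarded as
-- having `s` parts): the number of Littlewood–Richardson tableaux of shape
-- `λ ∖ μ` and weight `ν`, and `0` unless `μ ⊆ λ`.
open Classical in
noncomputable def LRCoeff (lam mu nu : ℕ → ℕ) (s : ℕ) : ℕ :=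
  if ∀ i, mu i ≤ lam i then {T : ℕ × ℕ → ℕ | IsLRTableau lam mu nu s T}.ncard
  else 0

/-- Extension of a partition by the value `c` at index `0`. -/
def lamExt (c : ℕ) (lam : ℕ → ℕ) : ℕ → ℕ := fun k => if k = 0 then c else lam k

/-- The prescribed multiplicity `μ^i_j` of the symbol `i` in row `m + j` of a
Littlewood–Richardson tableau of shape `λ ∖ w` and weight `v`:
`μ^i_j = λ_{i−j} − λ_{i−j+1}` for `2 ≤ j ≤ i`, `μ^i_1 = λ_{i−1} − λ_i − d` for
`i ≥ 2`, `μ^1_1 = λ_0 + (n−1)d − λ_1`, `μ^i_j = 0` for `i < j`, where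
`λ_0 := ã + c`. -/
def muCount (ta c d n : ℕ) (lam : ℕ → ℕ) (i j : ℕ) : ℕ :=
  if i < j then 0
  else if j = 1 then
    (if i = 1 then ta + c + (n - 1) * d - lam 1 else lam (i - 1) - lam i - d)
  else lamExt (ta + c) lam (i - j) - lamExt (ta + c) lam (i - j + 1)

/-!
Let `A_j(k)` be the number of symbols `k` in the first `m + j` rows, and put `α_k = λ_k - ã`, so
that `α_0 = c`. The first `n` rows of an LR tableau of this shape are forced, whence
`A_0(k) = α_k`, and the weight prescribes `A_n`. Symbols `1` below row `m` occur in row `m + 1`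
only, so `A_j(1)` equals its final value `c + (n - 1)d` as soon as `j ≥ 1`.

For `k ≥ 2`, descending induction on `j` shows `A_j(k) ≥ α_{k-j} - d`, where `α_{k-j} = c` if
`k ≤ j`: if `k < n` the lattice condition gives `A_j(k) ≥ A_{j+1}(k+1)`, while the symbols `n` of
row `m + j + 1` have no box below them, so that there are at most
`λ_{m+j+1} - λ_{m+j+2} = α_{n-j-1} - α_{n-j}` of them. By the pairing `λ_j + λ_{m+n+1-j} = ã + c`
the row lengths telescope to `∑_k A_j(k) = ∑_k α_{k-j}`, so all these lower bounds are attained.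
Differences of consecutive `A_j` are the multiplicities `μ^i_j`.
-/

section Counting

/-- The number of boxes of row `i` of a filling `T` of `λ ∖ μ` that carry the symbol `k`. -/
noncomputable def rowCount (lam mu : ℕ → ℕ) (T : ℕ × ℕ → ℕ) (i k : ℕ) : ℕ :=
  {p : ℕ × ℕ | InShape lam mu p ∧ p.1 = i ∧ T p = k}.ncard

/-- The number of boxes in the first `i` rows of a filling `T` of `λ ∖ μ` that carry the
symbol `k`. -/
noncomputable def prefixCount (lam mu : ℕ → ℕ) (T : ℕ × ℕ → ℕ) (i k : ℕ) : ℕ :=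
  {p : ℕ × ℕ | InShape lam mu p ∧ p.1 ≤ i ∧ T p = k}.ncard

variable {lam mu : ℕ → ℕ} {T : ℕ × ℕ → ℕ} {i k : ℕ}

lemma finite_inShape_fst_le (lam mu : ℕ → ℕ) (i : ℕ) :
    {p : ℕ × ℕ | InShape lam mu p ∧ p.1 ≤ i}.Finite := by
  refine ((Set.finite_Iic i).biUnion fun r _ =>
    (Set.finite_Iic (lam r)).image (Prod.mk r)).subset ?_
  rintro ⟨r, x⟩ ⟨hbox, hr⟩
  exact Set.mem_biUnion hr ⟨x, hbox.2.2, rfl⟩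

lemma InShape.above {x : ℕ} (hbox : InShape lam mu (i + 1, x)) (hi : 1 ≤ i)
    (hlam : lam (i + 1) ≤ lam i) (hmu : mu i ≤ mu (i + 1)) : InShape lam mu (i, x) :=
  ⟨hi, hmu.trans_lt hbox.2.1, hbox.2.2.trans hlam⟩

lemma rowCount_eq_card (hi : 1 ≤ i) :
    rowCount lam mu T i k = {x ∈ Finset.Ioc (mu i) (lam i) | T (i, x) = k}.card := by
  have hrow : {p : ℕ × ℕ | InShape lam mu p ∧ p.1 = i ∧ T p = k}
      = Prod.mk i '' ({x ∈ Finset.Ioc (mu i) (lam i) | T (i, x) = k} : Finset ℕ) := by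
    ext ⟨r, x⟩
    simp only [InShape, Finset.coe_filter, Finset.mem_Ioc, Set.mem_image, Set.mem_ofPred_eq,
      Prod.mk.injEq]
    grind
  rw [rowCount, hrow, Set.ncard_image_of_injective _ (Prod.mk_right_injective i),
    Set.ncard_coe_finset]

lemma prefixCount_succ (lam mu : ℕ → ℕ) (T : ℕ × ℕ → ℕ) (i k : ℕ) :
    prefixCount lam mu T (i + 1) k = prefixCount lam mu T i k + rowCount lam mu T (i + 1) k := by
  rw [prefixCount, prefixCount, rowCount, ← Set.ncard_union_eq
    (Set.disjoint_left.2 fun p hp hp' => by have := hp.2.1; have := hp'.2.1; omega)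
    ((finite_inShape_fst_le lam mu i).subset fun p hp => ⟨hp.1, hp.2.1⟩)
    ((finite_inShape_fst_le lam mu (i + 1)).subset fun p hp => ⟨hp.1, hp.2.1.le⟩)]
  refine congrArg Set.ncard (Set.ext fun p => ?_)
  simp only [Set.mem_ofPred_eq, Set.mem_union]
  grind

end Counting

namespace IsLRTableau

variable {lam mu nu : ℕ → ℕ} {s : ℕ} {T : ℕ × ℕ → ℕ} {i k : ℕ}

lemma row_mono (hT : IsLRTableau lam mu nu s T) {x y : ℕ} (hxy : x ≤ y)
    (hx : InShape lam mu (i, x)) (hy : InShape lam mu (i, y)) : T (i, x) ≤ T (i, y) := by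
  induction y, hxy using Nat.le_induction with
  | base => exact le_rfl
  | succ y hxy ih =>
    have hy' : InShape lam mu (i, y) := ⟨hy.1, hx.2.1.trans_le hxy, y.le_succ.trans hy.2.2⟩
    exact (ih hy').trans (hT.2.2.1 _ _ hy' hy)

lemma exists_column_threshold (hT : IsLRTableau lam mu nu s T) (i k : ℕ) :
    ∃ j, ∀ x, InShape lam mu (i, x) → (j ≤ x ↔ k < T (i, x)) := by
  classical
  by_cases hex : ∃ x, InShape lam mu (i, x) ∧ k < T (i, x)
  · obtain ⟨hbox, hlt⟩ := Nat.find_spec hex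
    exact ⟨Nat.find hex, fun x hx =>
      ⟨fun hle => hlt.trans_le (hT.row_mono hle hbox hx), fun hkx => Nat.find_min' hex ⟨hx, hkx⟩⟩⟩
  · push Not at hex
    exact ⟨lam i + 1, fun x hx =>
      ⟨fun hle => absurd hx.2.2 (by simpa using hle), fun hkx => absurd hkx (hex x hx).not_gt⟩⟩

-- Read the word up to the leftmost entry of row `i + 1` exceeding `k`: no `k` of that row is met.
lemma prefixCount_succ_succ_le (hT : IsLRTableau lam mu nu s T) (i : ℕ) (hk : 1 ≤ k) :
    prefixCount lam mu T (i + 1) (k + 1) ≤ prefixCount lam mu T i k := by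
  obtain ⟨j, hj⟩ := hT.exists_column_threshold (i + 1) k
  have hfin := finite_inShape_fst_le lam mu (i + 1)
  calc prefixCount lam mu T (i + 1) (k + 1)
      ≤ {p | p ∈ ReadingPrefix lam mu (i + 1) j ∧ T p = k + 1}.ncard := by
        refine Set.ncard_le_ncard ?_ (hfin.subset fun p hp => ⟨hp.1.1, by have := hp.1.2; omega⟩)
        rintro ⟨r, x⟩ ⟨hbox, hr, hTk⟩
        refine ⟨⟨hbox, ?_⟩, hTk⟩
        rcases hr.lt_or_eq with hlt | rfl
        · exact Or.inl hlt
        · exact Or.inr ⟨rfl, (hj x hbox).2 (hTk ▸ k.lt_succ_self)⟩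
    _ ≤ {p | p ∈ ReadingPrefix lam mu (i + 1) j ∧ T p = k}.ncard := hT.2.2.2.2.2 _ _ _ hk
    _ ≤ prefixCount lam mu T i k := by
        refine Set.ncard_le_ncard ?_
          ((finite_inShape_fst_le lam mu i).subset fun p hp => ⟨hp.1, hp.2.1⟩)
        rintro ⟨r, x⟩ ⟨⟨hbox, hr⟩, hTk⟩
        rcases hr with hlt | ⟨rfl, hle⟩
        · exact ⟨hbox, Nat.lt_succ_iff.1 hlt, hTk⟩
        · exact absurd hTk ((hj x hbox).1 hle).ne'

lemma prefixCount_eq_zero_of_lt (hT : IsLRTableau lam mu nu s T) (hik : i < k) :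
    prefixCount lam mu T i k = 0 := by
  induction i generalizing k with
  | zero =>
    have hempty : {p : ℕ × ℕ | InShape lam mu p ∧ p.1 ≤ 0 ∧ T p = k} = ∅ :=
      Set.eq_empty_of_forall_notMem fun p hp => absurd (hp.1.1.trans hp.2.1) (by decide)
    rw [prefixCount, hempty, Set.ncard_empty]
  | succ i ih =>
    obtain ⟨k, rfl⟩ := Nat.exists_eq_add_of_lt hik
    exact Nat.le_zero.1 ((hT.prefixCount_succ_succ_le i (by omega)).trans (ih (by omega)).le)

lemma apply_le_row (hT : IsLRTableau lam mu nu s T) {p : ℕ × ℕ} (hp : InShape lam mu p) :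
    T p ≤ p.1 := by
  by_contra! hlt
  have hfin : {q : ℕ × ℕ | InShape lam mu q ∧ q.1 ≤ p.1 ∧ T q = T p}.Finite :=
    (finite_inShape_fst_le lam mu p.1).subset fun q hq => ⟨hq.1, hq.2.1⟩
  have hmem : p ∈ {q : ℕ × ℕ | InShape lam mu q ∧ q.1 ≤ p.1 ∧ T q = T p} := ⟨hp, le_rfl, rfl⟩
  rw [(Set.ncard_eq_zero hfin).1 (hT.prefixCount_eq_zero_of_lt hlt)] at hmem
  exact hmem

lemma row_le_apply (hT : IsLRTableau lam mu nu s T) {x : ℕ}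
    (hlam : ∀ r, 1 ≤ r → r < i → lam (r + 1) ≤ lam r)
    (hmu : ∀ r, 1 ≤ r → r < i → mu r ≤ mu (r + 1))
    (hbox : InShape lam mu (i, x)) : i ≤ T (i, x) := by
  have hi : 1 ≤ i := hbox.1
  induction i, hi using Nat.le_induction with
  | base => exact (hT.1 _ hbox).1
  | succ i hi ih =>
    have hbox' := hbox.above hi (hlam i hi i.lt_succ_self) (hmu i hi i.lt_succ_self)
    exact (ih (fun r h1 hr => hlam r h1 (by omega)) (fun r h1 hr => hmu r h1 (by omega))
      hbox').trans_lt (hT.2.2.2.1 _ _ hbox' hbox)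

lemma rowCount_succ_one_eq_zero (hT : IsLRTableau lam mu nu s T) (hi : 1 ≤ i)
    (hlam : lam (i + 1) ≤ lam i) (hmu : mu i ≤ mu (i + 1)) :
    rowCount lam mu T (i + 1) 1 = 0 := by
  have hempty : {p : ℕ × ℕ | InShape lam mu p ∧ p.1 = i + 1 ∧ T p = 1} = ∅ := by
    refine Set.eq_empty_of_forall_notMem ?_
    rintro ⟨_, x⟩ ⟨hbox, rfl, hT1⟩
    have habove := hbox.above hi hlam hmu
    have hpos := (hT.1 _ habove).1
    have hlt := hT.2.2.2.1 _ _ habove hbox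
    omega
  rw [rowCount, hempty, Set.ncard_empty]

lemma rowCount_max_symbol_le (hT : IsLRTableau lam mu nu s T) (hmu : mu (i + 1) ≤ mu i) :
    rowCount lam mu T i s ≤ lam i - lam (i + 1) := by
  calc rowCount lam mu T i s
      ≤ (({i} ×ˢ Finset.Ioc (lam (i + 1)) (lam i) : Finset (ℕ × ℕ)) : Set (ℕ × ℕ)).ncard := by
        refine Set.ncard_le_ncard ?_ (Finset.finite_toSet _)
        rintro ⟨r, x⟩ ⟨hbox, rfl : r = i, hTs⟩
        have hbelow : lam (r + 1) < x := by
          by_contra! hx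
          have hbox' : InShape lam mu (r + 1, x) := ⟨by simp, hmu.trans_lt hbox.2.1, hx⟩
          exact ((hTs ▸ hT.2.2.2.1 _ _ hbox hbox').trans_le (hT.1 _ hbox').2).false
        simpa using ⟨hbelow, hbox.2.2⟩
    _ = lam i - lam (i + 1) := by
        rw [Set.ncard_coe_finset, Finset.card_product, Finset.card_singleton, one_mul, Nat.card_Ioc]

lemma sum_rowCount (hT : IsLRTableau lam mu nu s T) (hi : 1 ≤ i) :
    ∑ k ∈ Finset.range s, rowCount lam mu T i (k + 1) = lam i - mu i := by
  have hsym : ∀ x ∈ Finset.Ioc (mu i) (lam i), 1 ≤ T (i, x) ∧ T (i, x) ≤ s := fun x hx =>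
    hT.1 _ ⟨hi, Finset.mem_Ioc.1 hx⟩
  rw [← Nat.card_Ioc, Finset.card_eq_sum_card_fiberwise (t := Finset.range s)
    (f := fun x => T (i, x) - 1)
    (fun x hx => Finset.mem_coe.2 (Finset.mem_range.2
      (Nat.sub_one_lt_of_le (hsym x hx).1 (hsym x hx).2)))]
  refine Finset.sum_congr rfl fun k _ => ?_
  rw [rowCount_eq_card hi]
  refine congrArg Finset.card (Finset.filter_congr fun x hx => ?_)
  have := hsym x hx
  omega

lemma prefixCount_eq_weight (hT : IsLRTableau lam mu nu s T) {N : ℕ}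
    (hN : ∀ i, N < i → lam i ≤ mu i) (hk : 1 ≤ k) (hks : k ≤ s) :
    prefixCount lam mu T N k = nu k := by
  rw [← hT.2.2.2.2.1 k hk hks, prefixCount]
  congr 1
  ext p
  refine ⟨fun hp => ⟨hp.1, hp.2.2⟩, fun hp => ⟨hp.1, ?_, hp.2⟩⟩
  by_contra! hlt
  exact (hp.1.2.1.trans_le (hp.1.2.2.trans (hN _ hlt))).false

end IsLRTableau

section Arithmetic

variable {A : ℕ → ℕ → ℤ} {α : ℕ → ℤ} {n : ℕ}

lemma sub_le_of_diagonal_le {d : ℤ} (hfinal : ∀ k, 2 ≤ k → k ≤ n → α 0 - d ≤ A n k)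
    (hdiag : ∀ j k, 1 ≤ k → A (j + 1) (k + 1) ≤ A j k)
    (hlast : ∀ j < n, A (j + 1) n - A j n ≤ α (n - (j + 1)) - α (n - j))
    {j k : ℕ} (hj : j ≤ n) (hk : 2 ≤ k) (hkn : k ≤ n) : α (k - j) - d ≤ A j k := by
  induction hj using Nat.decreasingInduction generalizing k with
  | self => simpa [Nat.sub_eq_zero_of_le hkn] using hfinal k hk hkn
  | of_succ j hj ih =>
    rcases hkn.lt_or_eq with hlt | rfl
    · have hnext := ih (k := k + 1) (by omega) hlt
      rw [Nat.add_sub_add_right] at hnext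
      exact hnext.trans (hdiag j k (by omega))
    · have hnext := ih hk le_rfl
      have hstep := hlast j hj
      linarith

lemma sum_eq_sum_shift (hinit : ∀ k, 1 ≤ k → k ≤ n → A 0 k = α k)
    (hstep : ∀ j < n, ∑ k ∈ Finset.range n, A (j + 1) (k + 1)
      = ∑ k ∈ Finset.range n, A j (k + 1) + (α 0 - α (n - j)))
    {j : ℕ} (hj : j ≤ n) :
    ∑ k ∈ Finset.range n, A j (k + 1) = ∑ k ∈ Finset.range n, α (k + 1 - j) := by
  induction j with
  | zero => exact Finset.sum_congr rfl fun k hk => hinit _ (by omega) (Finset.mem_range.1 hk)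
  | succ j ih =>
    have htelescope : ∑ k ∈ Finset.range n, α (k - j) + α (n - j)
        = ∑ k ∈ Finset.range n, α (k + 1 - j) + α 0 := by
      rw [← Finset.sum_range_succ (fun k => α (k - j)), Finset.sum_range_succ', Nat.zero_sub]
    rw [hstep j hj, ih (by omega)]
    simp only [Nat.add_sub_add_right]
    linarith

lemma eq_sub_of_sum_eq {f g : ℕ → ℤ} {d : ℤ} (hone : f 1 = g 1 + (n - 1) * d)
    (hle : ∀ k, 2 ≤ k → k ≤ n → g k - d ≤ f k)
    (hsum : ∑ k ∈ Finset.range n, f (k + 1) = ∑ k ∈ Finset.range n, g (k + 1))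
    {k : ℕ} (hk : 2 ≤ k) (hkn : k ≤ n) : f k = g k - d := by
  obtain ⟨q, rfl⟩ : ∃ q, n = q + 1 := ⟨n - 1, by omega⟩
  obtain ⟨l, rfl⟩ : ∃ l, k = l + 2 := ⟨k - 2, by omega⟩
  have htail : ∑ l ∈ Finset.range q, (g (l + 2) - d) = ∑ l ∈ Finset.range q, f (l + 2) := by
    rw [Finset.sum_range_succ', Finset.sum_range_succ', zero_add, hone] at hsum
    rw [Finset.sum_sub_distrib, Finset.sum_const, Finset.card_range, nsmul_eq_mul]
    push_cast at hsum
    linarith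
  have hle_tail : ∀ l ∈ Finset.range q, g (l + 2) - d ≤ f (l + 2) := fun l hl =>
    hle _ (by omega) (by have := Finset.mem_range.1 hl; omega)
  exact ((Finset.sum_eq_sum_iff_of_le hle_tail).1 htail l (Finset.mem_range.2 (by omega))).symm

end Arithmetic

/-- The skew shapes `λ ∖ w` to which the labeling applies: `n` top rows starting in column `ã + 1`,
paired with `n` bottom rows starting in column `1`, and no box in the rows `n + 1, …, m`, in which
`λ` and `w` agree but need not be constant. -/
structure IsSphericalShape (m n ta c : ℕ) (lam w : ℕ → ℕ) : Prop where
  le : n ≤ m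
  w_top : ∀ i, 1 ≤ i → i ≤ n → w i = ta
  w_bottom : ∀ i, m < i → w i = 0
  isPartition : IsPartitionOfLength (m + n) lam
  pair : ∀ j, 1 ≤ j → j ≤ n → lam j + lam (m + n + 1 - j) = ta + c
  lam_mid : ∀ i, n < i → i ≤ m → lam i = w i
  last : ta ≤ lam n

/-- `α_k = λ_k - ã` with `λ_0 = ã + c`: for `1 ≤ k ≤ n` the number of boxes in row `k` of `λ ∖ w`,
and `α_0 = c`. -/
def excess (ta c : ℕ) (lam : ℕ → ℕ) (k : ℕ) : ℤ := lamExt (ta + c) lam k - ta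

lemma excess_zero (ta c : ℕ) (lam : ℕ → ℕ) : excess ta c lam 0 = c := by
  simp [excess, lamExt]

lemma excess_of_pos (ta c : ℕ) (lam : ℕ → ℕ) {k : ℕ} (hk : 1 ≤ k) :
    excess ta c lam k = lam k - ta := by
  simp [excess, lamExt, Nat.one_le_iff_ne_zero.1 hk]

namespace IsSphericalShape

variable {m n ta c d : ℕ} {lam w v : ℕ → ℕ} {T : ℕ × ℕ → ℕ} {i j k : ℕ}

lemma le_lam (h : IsSphericalShape m n ta c lam w) (hk : 1 ≤ k) (hkn : k ≤ n) : ta ≤ lam k :=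
  h.last.trans (antitoneOn_nat_Ici_of_succ_le h.isPartition.1 hk (hk.trans hkn) hkn)

lemma lam_bottom (h : IsSphericalShape m n ta c lam w) (hj : j ≤ n) :
    (lam (m + (j + 1)) : ℤ) = c - excess ta c lam (n - j) := by
  rcases hj.lt_or_eq with hlt | rfl
  · have hpair := h.pair (n - j) (by omega) (by omega)
    rw [show m + n + 1 - (n - j) = m + (j + 1) by omega] at hpair
    rw [excess_of_pos ta c lam (by omega)]
    omega
  · rw [h.isPartition.2 _ (by omega), Nat.sub_self, excess_zero, Nat.cast_zero, sub_self]

lemma not_inShape_mid (h : IsSphericalShape m n ta c lam w) (hi : n < i) (him : i ≤ m) (x : ℕ) :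
    ¬ InShape lam w (i, x) := fun hbox =>
  (hbox.2.1.trans_le (hbox.2.2.trans (h.lam_mid i hi him).le)).false

lemma apply_eq_row (h : IsSphericalShape m n ta c lam w) (hT : IsLRTableau lam w v n T)
    {x : ℕ} (hi : i ≤ n) (hbox : InShape lam w (i, x)) : T (i, x) = i := by
  refine (hT.apply_le_row hbox).antisymm (hT.row_le_apply (fun r h1 _ => h.isPartition.1 r h1) ?_
    hbox)
  intro r h1 hr
  rw [h.w_top r h1 (by omega), h.w_top (r + 1) (by omega) (by omega)]

lemma prefixCount_top (h : IsSphericalShape m n ta c lam w) (hT : IsLRTableau lam w v n T)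
    (hk : 1 ≤ k) (hkn : k ≤ n) : (prefixCount lam w T m k : ℤ) = excess ta c lam k := by
  have hrow : {p : ℕ × ℕ | InShape lam w p ∧ p.1 ≤ m ∧ T p = k}
      = (({k} ×ˢ Finset.Ioc ta (lam k) : Finset (ℕ × ℕ)) : Set (ℕ × ℕ)) := by
    ext ⟨i, x⟩
    simp only [Set.mem_ofPred_eq, Finset.mem_coe, Finset.mem_product, Finset.mem_singleton,
      Finset.mem_Ioc]
    constructor
    · rintro ⟨hbox, him, hTk⟩
      have hin : i ≤ n := by
        by_contra! hlt
        exact h.not_inShape_mid hlt him x hbox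
      obtain rfl : i = k := (h.apply_eq_row hT hin hbox).symm.trans hTk
      exact ⟨rfl, h.w_top i hk hkn ▸ hbox.2.1, hbox.2.2⟩
    · rintro ⟨rfl, hx⟩
      have hbox : InShape lam w (i, x) := ⟨hk, by simpa only [h.w_top i hk hkn] using hx⟩
      exact ⟨hbox, hkn.trans h.le, h.apply_eq_row hT hkn hbox⟩
  rw [prefixCount, hrow, Set.ncard_coe_finset, Finset.card_product, Finset.card_singleton, one_mul,
    Nat.card_Ioc, Nat.cast_sub (h.le_lam hk hkn), excess_of_pos ta c lam hk]

lemma prefixCount_weight (h : IsSphericalShape m n ta c lam w) (hT : IsLRTableau lam w v n T)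
    (hk : 1 ≤ k) (hkn : k ≤ n) : prefixCount lam w T (m + n) k = v k :=
  hT.prefixCount_eq_weight (fun i hi => (h.isPartition.2 i hi).trans_le (Nat.zero_le _)) hk hkn

lemma prefixCount_one (h : IsSphericalShape m n ta c lam w) (hT : IsLRTableau lam w v n T)
    (hj : 1 ≤ j) (hjn : j ≤ n) : prefixCount lam w T (m + j) 1 = v 1 := by
  induction hjn using Nat.decreasingInduction with
  | self => exact h.prefixCount_weight hT le_rfl hj
  | of_succ j _ ih =>
    have hzero := hT.rowCount_succ_one_eq_zero (i := m + j) (by omega)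
      (h.isPartition.1 _ (by omega)) (by rw [h.w_bottom _ (by omega)]; exact Nat.zero_le _)
    rw [← ih (by omega), ← add_assoc, prefixCount_succ, hzero, add_zero]

lemma le_prefixCount (h : IsSphericalShape m n ta c lam w) (hT : IsLRTableau lam w v n T)
    (hv : ∀ k, 2 ≤ k → k ≤ n → (v k : ℤ) = c - d) (hj : j ≤ n) (hk : 2 ≤ k) (hkn : k ≤ n) :
    excess ta c lam (k - j) - d ≤ prefixCount lam w T (m + j) k := by
  refine sub_le_of_diagonal_le (A := fun j k => (prefixCount lam w T (m + j) k : ℤ))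
    (fun k hk hkn => ?_) (fun j k hk => ?_) (fun j hj => ?_) hj hk hkn
  · rw [h.prefixCount_weight hT (by omega) hkn, hv k hk hkn, excess_zero]
  · exact_mod_cast hT.prefixCount_succ_succ_le (m + j) hk
  · have hmax := hT.rowCount_max_symbol_le (i := m + (j + 1))
      (by rw [h.w_bottom _ (by omega)]; exact Nat.zero_le _)
    have hdesc := h.isPartition.1 (m + (j + 1)) (by omega)
    have hrow := h.lam_bottom hj.le
    have hrow' : (lam (m + (j + 1) + 1) : ℤ) = _ := h.lam_bottom (j := j + 1) hj
    have hsucc : prefixCount lam w T (m + (j + 1)) n = _ := prefixCount_succ lam w T (m + j) n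
    rw [add_assoc] at hsucc
    omega

lemma sum_prefixCount (h : IsSphericalShape m n ta c lam w) (hT : IsLRTableau lam w v n T)
    (hj : j ≤ n) : ∑ k ∈ Finset.range n, (prefixCount lam w T (m + j) (k + 1) : ℤ)
      = ∑ k ∈ Finset.range n, excess ta c lam (k + 1 - j) := by
  refine sum_eq_sum_shift (A := fun j k => (prefixCount lam w T (m + j) k : ℤ))
    (fun k hk hkn => h.prefixCount_top hT hk hkn) (fun j hj => ?_) hj
  have hrow := hT.sum_rowCount (i := m + (j + 1)) (by omega)
  rw [h.w_bottom _ (by omega), Nat.sub_zero] at hrow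
  rw [excess_zero, ← h.lam_bottom hj.le, ← hrow, Nat.cast_sum, ← Finset.sum_add_distrib]
  exact Finset.sum_congr rfl fun k _ => mod_cast prefixCount_succ lam w T (m + j) (k + 1)

lemma prefixCount_eq (h : IsSphericalShape m n ta c lam w) (hT : IsLRTableau lam w v n T)
    (hv1 : v 1 = c + (n - 1) * d) (hv : ∀ k, 2 ≤ k → k ≤ n → (v k : ℤ) = c - d)
    (hj : 1 ≤ j) (hjn : j ≤ n) (hk : 2 ≤ k) (hkn : k ≤ n) :
    (prefixCount lam w T (m + j) k : ℤ) = excess ta c lam (k - j) - d := by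
  refine eq_sub_of_sum_eq (f := fun k => (prefixCount lam w T (m + j) k : ℤ))
    (g := fun k => excess ta c lam (k - j)) ?_ (fun k => h.le_prefixCount hT hv hjn)
    (h.sum_prefixCount hT hjn) hk hkn
  rw [h.prefixCount_one hT hj hjn, hv1, Nat.sub_eq_zero_of_le hj, excess_zero, Nat.cast_add,
    Nat.cast_mul, Nat.cast_sub (hj.trans hjn), Nat.cast_one]

lemma rowCount_one (h : IsSphericalShape m n ta c lam w) (hT : IsLRTableau lam w v n T)
    (hv1 : v 1 = c + (n - 1) * d) (hj : 1 ≤ j) (hjn : j ≤ n) :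
    rowCount lam w T (m + j) 1 = muCount ta c d n lam 1 j := by
  obtain ⟨j, rfl⟩ := Nat.exists_eq_add_of_le' hj
  have hsucc := prefixCount_succ lam w T (m + j) 1
  rw [add_assoc, h.prefixCount_one hT hj hjn] at hsucc
  rcases Nat.eq_zero_or_pos j with rfl | hpos
  · have htop := h.prefixCount_top hT le_rfl hjn
    rw [excess_of_pos ta c lam le_rfl] at htop
    simp only [muCount, add_zero, zero_add, lt_irrefl, if_false, if_true] at hsucc ⊢
    omega
  · rw [h.prefixCount_one hT hpos (by omega)] at hsucc
    simp only [muCount, Nat.lt_add_of_pos_left hpos, if_true]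
    omega

lemma rowCount_of_two_le (h : IsSphericalShape m n ta c lam w) (hT : IsLRTableau lam w v n T)
    (hv1 : v 1 = c + (n - 1) * d) (hv : ∀ k, 2 ≤ k → k ≤ n → (v k : ℤ) = c - d)
    (hj : 1 ≤ j) (hjn : j ≤ n) (hi : 2 ≤ i) (hin : i ≤ n) :
    rowCount lam w T (m + j) i = muCount ta c d n lam i j := by
  obtain ⟨j, rfl⟩ := Nat.exists_eq_add_of_le' hj
  have hsucc := prefixCount_succ lam w T (m + j) i
  rw [add_assoc] at hsucc
  have hnew := h.prefixCount_eq hT hv1 hv hj hjn hi hin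
  rcases Nat.eq_zero_or_pos j with rfl | hpos
  · have htop := h.prefixCount_top hT (by omega) hin
    rw [excess_of_pos ta c lam (by omega)] at htop hnew
    simp only [muCount, add_zero, zero_add, show ¬ i < 1 by omega, show i ≠ 1 by omega, if_false,
      if_true] at hsucc hnew ⊢
    omega
  · have hold := h.prefixCount_eq hT hv1 hv hpos (by omega) hi hin
    rw [excess] at hold hnew
    by_cases hlt : i < j + 1
    · rw [Nat.sub_eq_zero_of_le (by omega)] at hold hnew
      simp only [muCount, hlt, if_true]
      omega
    · simp only [muCount, hlt, show j + 1 ≠ 1 by omega, if_false,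
        show i - (j + 1) + 1 = i - j by omega]
      omega

end IsSphericalShape

theorem lr_spherical_tableau_labeling_general {m n ta c d : ℕ} {lam w v : ℕ → ℕ}
    (h : IsSphericalShape m n ta c lam w) (hd : d ≤ c) (hv1 : v 1 = c + (n - 1) * d)
    (hv2 : ∀ i, 2 ≤ i → i ≤ n → v i = c - d) {T : ℕ × ℕ → ℕ} (hT : IsLRTableau lam w v n T) :
    (∀ i j, 1 ≤ i → i ≤ n → InShape lam w (i, j) → T (i, j) = i) ∧
    (∀ i j, n + 1 ≤ i → i ≤ m → ¬ InShape lam w (i, j)) ∧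
    (∀ j i, 1 ≤ j → j ≤ n → 1 ≤ i → i ≤ n →
      {p : ℕ × ℕ | InShape lam w p ∧ p.1 = m + j ∧ T p = i}.ncard =
        muCount ta c d n lam i j) := by
  have hv : ∀ k, 2 ≤ k → k ≤ n → (v k : ℤ) = c - d := fun k hk hkn => by
    rw [hv2 k hk hkn, Nat.cast_sub hd]
  refine ⟨fun i j _ => h.apply_eq_row hT, fun i j hi him => h.not_inShape_mid hi him j,
    fun j i hj hjn hi hin => ?_⟩
  rcases hi.eq_or_lt with rfl | hi
  · exact h.rowCount_one hT hv1 hj hjn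
  · exact h.rowCount_of_two_le hT hv1 hv hj hjn hi hin

/-- Under the hypotheses of Lemma (sl), every Littlewood–Richardson tableau of
shape `λ ∖ w` and weight `v` has the prescribed labeling: every box of row `i`
(`1 ≤ i ≤ n`) carries the symbol `i`; rows `n+1, …, m` carry no boxes; and row
`m + j` carries the symbol `i` exactly `μ^i_j` times. -/
theorem lr_spherical_tableau_labeling (m n ta a c d : ℕ) (hn : 1 ≤ n)
    (hmn : n ≤ m) (h1 : a ≤ ta) (h2 : c ≤ a) (h3 : d ≤ c)
    (w : ℕ → ℕ)
    (hw1 : ∀ i, 1 ≤ i → i ≤ n → w i = ta)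
    (hw2 : ∀ i, n < i → i ≤ m → w i = a)
    (hw3 : ∀ i, m < i → w i = 0)
    (v : ℕ → ℕ)
    (hv1 : v 1 = c + (n - 1) * d)
    (hv2 : ∀ i, 2 ≤ i → i ≤ n → v i = c - d)
    (hv3 : ∀ i, n < i → v i = 0)
    (lam : ℕ → ℕ) (hlam : IsPartitionOfLength (m + n) lam)
    (hpair : ∀ j, 1 ≤ j → j ≤ n → lam j + lam (m + n + 1 - j) = ta + c)
    (hmid : ∀ j, 1 ≤ j → j ≤ m - n → lam (n + j) = a)
    (hlast : ta ≤ lam n)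
    (hgap : ∀ i, 1 ≤ i → i ≤ n - 1 → lam (i + 1) + d ≤ lam i) :
    ∀ T : ℕ × ℕ → ℕ, IsLRTableau lam w v n T →
      (∀ i j, 1 ≤ i → i ≤ n → InShape lam w (i, j) → T (i, j) = i) ∧
      (∀ i j, n + 1 ≤ i → i ≤ m → ¬ InShape lam w (i, j)) ∧
      (∀ j i, 1 ≤ j → j ≤ n → 1 ≤ i → i ≤ n →
        {p : ℕ × ℕ | InShape lam w p ∧ p.1 = m + j ∧ T p = i}.ncard =
          muCount ta c d n lam i j) := by
  intro T hT
  have hmid' : ∀ i, n < i → i ≤ m → lam i = w i := fun i hi him => by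
    rw [hw2 i hi him, ← hmid (i - n) (by omega) (by omega), Nat.add_sub_cancel' hi.le]
  exact lr_spherical_tableau_labeling_general
    ⟨hmn, hw1, hw3, hlam, hpair, hmid', hlast⟩ h3 hv1 hv2 hT
end

section
/- Let m ≥ n ≥ 1 and let ã ≥ a ≥ c ≥ d ≥ 0 be integers. Let w be the partition of length m with w_i = ã for 1 ≤ i ≤ n and w_i = a for n < i ≤ m, and let v be the partition of length n with v_1 = c + (n−1)d and v_i = c − d for 2 ≤ i ≤ n. Let λ be a partition of length at most m+n satisfying λ_j + λ_{m+n+1−j} = ã + c for j = 1,…,n and λ_{n+j} = a for j = 1,…,m−n. If the Littlewood–Richardson coefficient c^λ_{w,v} is nonzero, then λ_n ≥ ã and λ_i − λ_{i+1} ≥ d for all i = 1,…,n−1. -/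
/-! For `k ≥ 2` the symbol `k` occurs `v_k` times. We find `λ_k - ã` copies of it near the top of
the tableau and `λ_{m+n+2-k}` copies near the bottom; the pairing condition turns the resulting
bound `λ_k + λ_{m+n+2-k} ≤ ã + v_k` into `λ_k + d ≤ λ_{k-1}`.

Top: the first `n` rows start in the same column, so row `k` consists of `k`s. Bottom: rows below
`m` start in the first column, so by column strictness the first `λ_{m+n+2-k}` entries of row
`m + 2` are at most `k`. It remains to see that row `m + 2` has at most as many entries `≤ k` as
there are `k`s from row `m + 2` downwards. Since `v_k = v_{k+1}`, the lattice condition read from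
the end of the word says that there are at most as many `k`s from row `i` on as `k+1`s after row
`i`, and induction on `k` starting from `k = 2` gives the claim. -/

namespace IsPartitionOfLength

variable {r : ℕ} {lam : ℕ → ℕ}

theorem antitoneOn (h : IsPartitionOfLength r lam) : AntitoneOn lam (Set.Ici 1) :=
  antitoneOn_nat_Ici_of_succ_le h.1

theorem finite_setOf_inShape (h : IsPartitionOfLength r lam) (mu : ℕ → ℕ) :
    {p | InShape lam mu p}.Finite := by
  refine ((Set.finite_Iic r).biUnion fun i _ =>
    (Set.finite_singleton i).prod (Set.finite_Iic (lam i))).subset ?_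
  rintro ⟨i, j⟩ ⟨-, hj, hj'⟩
  have hir : i ≤ r := by
    by_contra! hri
    have := h.2 i hri
    dsimp only at hj hj'
    omega
  exact Set.mem_biUnion hir ⟨rfl, hj'⟩

end IsPartitionOfLength

/-- The number of boxes of `λ ∖ μ` lying in a row from `I` in which the filling `T` has an entry
from `K`. -/
noncomputable def entryCount (lam mu : ℕ → ℕ) (T : ℕ × ℕ → ℕ) (I K : Set ℕ) : ℕ :=
  {p | InShape lam mu p ∧ p.1 ∈ I ∧ T p ∈ K}.ncard

section EntryCount

variable {lam mu : ℕ → ℕ} {T : ℕ × ℕ → ℕ} {I J K L : Set ℕ}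

theorem entryCount_mono (hfin : {p | InShape lam mu p}.Finite) (hI : I ⊆ J) (hK : K ⊆ L) :
    entryCount lam mu T I K ≤ entryCount lam mu T J L :=
  Set.ncard_le_ncard (fun _ hp => ⟨hp.1, hI hp.2.1, hK hp.2.2⟩) (hfin.subset fun _ hp => hp.1)

theorem entryCount_rows_union (hfin : {p | InShape lam mu p}.Finite) (hIJ : Disjoint I J) :
    entryCount lam mu T (I ∪ J) K = entryCount lam mu T I K + entryCount lam mu T J K := by
  unfold entryCount
  rw [← Set.ncard_union_eq
    (Set.disjoint_left.2 fun _ hp hp' => Set.disjoint_left.1 hIJ hp.2.1 hp'.2.1)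
    (hfin.subset fun _ hp => hp.1) (hfin.subset fun _ hp => hp.1)]
  congr 1
  ext p
  simp only [Set.mem_union, Set.mem_ofPred_eq]
  tauto

theorem entryCount_entries_union_le :
    entryCount lam mu T I (K ∪ L) ≤ entryCount lam mu T I K + entryCount lam mu T I L := by
  unfold entryCount
  refine (congrArg Set.ncard ?_).trans_le (Set.ncard_union_le _ _)
  ext p
  simp only [Set.mem_union, Set.mem_ofPred_eq]
  tauto

theorem sub_le_entryCount_singleton (hfin : {p | InShape lam mu p}.Finite) {i a b : ℕ}
    (h : ∀ j, a < j → j ≤ b → InShape lam mu (i, j) ∧ T (i, j) ∈ K) :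
    b - a ≤ entryCount lam mu T {i} K := by
  have hsub : Prod.mk i '' Set.Ioc a b ⊆
      {p | InShape lam mu p ∧ p.1 ∈ ({i} : Set ℕ) ∧ T p ∈ K} := by
    rintro _ ⟨j, hj, rfl⟩
    exact ⟨(h j hj.1 hj.2).1, rfl, (h j hj.1 hj.2).2⟩
  calc b - a = (Prod.mk i '' Set.Ioc a b).ncard := by
        rw [Set.ncard_image_of_injective _ (Prod.mk_right_injective i), ← Finset.coe_Ioc,
          Set.ncard_coe_finset, Nat.card_Ioc]
    _ ≤ entryCount lam mu T {i} K := Set.ncard_le_ncard hsub (hfin.subset fun _ hp => hp.1)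

end EntryCount

namespace IsLRTableau

variable {lam mu nu : ℕ → ℕ} {s : ℕ} {T : ℕ × ℕ → ℕ}

theorem one_le (hT : IsLRTableau lam mu nu s T) {p : ℕ × ℕ} (hp : InShape lam mu p) : 1 ≤ T p :=
  (hT.1 p hp).1

theorem le_numSymbols (hT : IsLRTableau lam mu nu s T) {p : ℕ × ℕ} (hp : InShape lam mu p) :
    T p ≤ s :=
  (hT.1 p hp).2

theorem le_of_row (hT : IsLRTableau lam mu nu s T) {i j j' : ℕ} (hjj' : j ≤ j')
    (hj : InShape lam mu (i, j)) (hj' : InShape lam mu (i, j')) : T (i, j) ≤ T (i, j') := by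
  induction j', hjj' using Nat.le_induction with
  | base => exact le_rfl
  | succ l hjl ih =>
    have hl : InShape lam mu (i, l) :=
      ⟨hj.1, hj.2.1.trans_le hjl, l.le_succ.trans hj'.2.2⟩
    exact (ih hl).trans (hT.2.2.1 i l hl hj')

theorem add_le_of_column (hT : IsLRTableau lam mu nu s T) {i j t : ℕ}
    (hcol : ∀ u ≤ t, InShape lam mu (i + u, j)) : T (i, j) + t ≤ T (i + t, j) := by
  induction t with
  | zero => exact le_rfl
  | succ t ih =>
    have hlt := hT.2.2.2.1 (i + t) j (hcol t t.le_succ) (hcol (t + 1) le_rfl)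
    exact (Nat.succ_le_succ (ih fun u hu => hcol u (hu.trans t.le_succ))).trans hlt

theorem entryCount_univ_singleton (hT : IsLRTableau lam mu nu s T) {k : ℕ} (hk : 1 ≤ k)
    (hks : k ≤ s) : entryCount lam mu T Set.univ {k} = nu k := by
  simpa [entryCount] using hT.2.2.2.2.1 k hk hks

theorem exists_column_le_iff_lt (hT : IsLRTableau lam mu nu s T) (i k : ℕ) :
    ∃ j, ∀ j', InShape lam mu (i, j') → (j ≤ j' ↔ k < T (i, j')) := by
  classical
  have hex : ∃ j, ∀ j' ≥ j, InShape lam mu (i, j') → k < T (i, j') :=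
    ⟨lam i + 1, fun j' hj' hin => absurd hin.2.2 (Nat.not_le.2 hj')⟩
  refine ⟨Nat.find hex, fun j' hin => ⟨fun hj' => Nat.find_spec hex j' hj' hin, fun hk => ?_⟩⟩
  exact Nat.find_min' hex fun l hl hin' => hk.trans_le (hT.le_of_row hl hin hin')

/-- The lattice condition, read just after the last `k + 1` and just before the first `k` of
row `i`. -/
theorem entryCount_Iic_succ_le (hT : IsLRTableau lam mu nu s T)
    (hfin : {p | InShape lam mu p}.Finite) (i : ℕ) {k : ℕ} (hk : 1 ≤ k) :
    entryCount lam mu T (Set.Iic i) {k + 1} ≤ entryCount lam mu T (Set.Iio i) {k} := by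
  obtain ⟨j, hj⟩ := hT.exists_column_le_iff_lt i k
  have hsucc : {p | InShape lam mu p ∧ p.1 ∈ Set.Iic i ∧ T p ∈ ({k + 1} : Set ℕ)} ⊆
      {p | p ∈ ReadingPrefix lam mu i j ∧ T p = k + 1} := by
    rintro ⟨i', j'⟩ ⟨hin, hi', hTp : T (i', j') = k + 1⟩
    refine ⟨⟨hin, (Set.mem_Iic.1 hi').lt_or_eq.imp_right fun hii' => ⟨hii', ?_⟩⟩, hTp⟩
    obtain rfl : i' = i := hii'
    exact (hj j' hin).2 (by omega)
  have hself : {p | p ∈ ReadingPrefix lam mu i j ∧ T p = k} ⊆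
      {p | InShape lam mu p ∧ p.1 ∈ Set.Iio i ∧ T p ∈ ({k} : Set ℕ)} := by
    rintro ⟨i', j'⟩ ⟨⟨hin, hi' | ⟨hii', hjj'⟩⟩, hTp⟩
    · exact ⟨hin, hi', hTp⟩
    · obtain rfl : i' = i := hii'
      exact absurd hTp ((hj j' hin).1 hjj').ne'
  calc entryCount lam mu T (Set.Iic i) {k + 1}
      ≤ {p | p ∈ ReadingPrefix lam mu i j ∧ T p = k + 1}.ncard :=
        Set.ncard_le_ncard hsucc (hfin.subset fun _ hp => hp.1.1)
    _ ≤ {p | p ∈ ReadingPrefix lam mu i j ∧ T p = k}.ncard := hT.2.2.2.2.2 i j k hk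
    _ ≤ entryCount lam mu T (Set.Iio i) {k} :=
        Set.ncard_le_ncard hself (hfin.subset fun _ hp => hp.1)

theorem entryCount_Ici_le_entryCount_Ioi_succ (hT : IsLRTableau lam mu nu s T)
    (hfin : {p | InShape lam mu p}.Finite) (i : ℕ) {k : ℕ} (hk : 1 ≤ k) (hks : k < s)
    (hnu : nu k ≤ nu (k + 1)) :
    entryCount lam mu T (Set.Ici i) {k} ≤ entryCount lam mu T (Set.Ioi i) {k + 1} := by
  have hself := entryCount_rows_union (T := T) (K := {k}) hfin
    (Set.Iio_disjoint_Ici (le_refl i))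
  have hsucc := entryCount_rows_union (T := T) (K := {k + 1}) hfin
    (Set.Iic_disjoint_Ioi (le_refl i))
  rw [Set.Iio_union_Ici, hT.entryCount_univ_singleton hk hks.le] at hself
  rw [Set.Iic_union_Ioi, hT.entryCount_univ_singleton (k := k + 1) (by omega) hks] at hsucc
  have := hT.entryCount_Iic_succ_le hfin i hk
  omega

theorem le_row (hT : IsLRTableau lam mu nu s T) (hfin : {p | InShape lam mu p}.Finite)
    {i j : ℕ} (hij : InShape lam mu (i, j)) : T (i, j) ≤ i := by
  induction i using Nat.strong_induction_on generalizing j with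
  | _ i ih =>
    obtain hle | ⟨k, hk, hTk⟩ : T (i, j) ≤ 1 ∨ ∃ k, 1 ≤ k ∧ T (i, j) = k + 1 := by
      rcases Nat.lt_or_ge 1 (T (i, j)) with h | h
      · exact Or.inr ⟨T (i, j) - 1, by omega, by omega⟩
      · exact Or.inl h
    · exact hle.trans hij.1
    · have hpos : 0 < entryCount lam mu T (Set.Iic i) {k + 1} :=
        (Set.ncard_pos (hfin.subset fun _ hp => hp.1)).2 ⟨(i, j), hij, le_refl i, hTk⟩
      obtain ⟨⟨i', j'⟩, hin, hi', hTk'⟩ := Set.nonempty_of_ncard_ne_zero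
        (hpos.trans_le (hT.entryCount_Iic_succ_le hfin i hk)).ne'
      calc T (i, j) = T (i', j') + 1 := by rw [hTk, Set.mem_singleton_iff.1 hTk']
        _ ≤ i' + 1 := Nat.succ_le_succ (ih i' hi' hin)
        _ ≤ i := hi'

theorem entryCount_singleton_Iic_le (hT : IsLRTableau lam mu nu s T)
    (hfin : {p | InShape lam mu p}.Finite) {i l k : ℕ} (hl : 1 ≤ l)
    (hrow : ∀ j, InShape lam mu (i, j) → l ≤ T (i, j)) (hnu : MonotoneOn nu (Set.Icc l s))
    (hlk : l ≤ k) (hks : k ≤ s) :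
    entryCount lam mu T {i} (Set.Iic k) ≤ entryCount lam mu T (Set.Ici i) {k} := by
  induction k, hlk using Nat.le_induction with
  | base =>
    refine Set.ncard_le_ncard ?_ (hfin.subset fun _ hp => hp.1)
    rintro ⟨i', j⟩ ⟨hin, rfl : i' = i, hle⟩
    exact ⟨hin, le_refl i', le_antisymm hle (hrow j hin)⟩
  | succ k hlk ih =>
    have hIic : Set.Iic (k + 1) = Set.Iic k ∪ {k + 1} := by
      ext x; simp only [Set.mem_Iic, Set.mem_union, Set.mem_singleton_iff]; omega
    have hstep := hnu ⟨hlk, by omega⟩ ⟨by omega, hks⟩ k.le_succ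
    calc entryCount lam mu T {i} (Set.Iic (k + 1))
        ≤ entryCount lam mu T {i} (Set.Iic k) + entryCount lam mu T {i} {k + 1} :=
          hIic ▸ entryCount_entries_union_le
      _ ≤ entryCount lam mu T (Set.Ici i) {k} + entryCount lam mu T {i} {k + 1} := by
          gcongr; exact ih (by omega)
      _ ≤ entryCount lam mu T (Set.Ioi i) {k + 1} + entryCount lam mu T {i} {k + 1} := by
          gcongr
          exact hT.entryCount_Ici_le_entryCount_Ioi_succ hfin i (hl.trans hlk) hks hstep
      _ = entryCount lam mu T (Set.Ici i) {k + 1} := by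
          rw [← entryCount_rows_union hfin (by simp), Set.union_singleton, Set.Ioi_insert]

theorem sub_le_entryCount_row (hT : IsLRTableau lam mu nu s T)
    (hfin : {p | InShape lam mu p}.Finite) (hlam : AntitoneOn lam (Set.Ici 1)) {k a : ℕ}
    (hk : 1 ≤ k) (hmu : ∀ i, 1 ≤ i → i ≤ k → mu i = a) :
    lam k - a ≤ entryCount lam mu T {k} {k} := by
  refine sub_le_entryCount_singleton hfin fun j haj hjk => ?_
  have hcol : ∀ i, 1 ≤ i → i ≤ k → InShape lam mu (i, j) := fun i hi hik =>
    ⟨hi, (hmu i hi hik).trans_lt haj, hjk.trans (hlam hi hk hik)⟩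
  have hkj := hcol k hk le_rfl
  have hge : T (1, j) + (k - 1) ≤ T (1 + (k - 1), j) :=
    hT.add_le_of_column fun u hu => hcol (1 + u) (by omega) (by omega)
  have hone := hT.one_le (hcol 1 le_rfl hk)
  rw [Nat.add_sub_cancel' hk] at hge
  exact ⟨hkj, le_antisymm (hT.le_row hfin hkj) (by omega)⟩

theorem le_entryCount_row_Iic (hT : IsLRTableau lam mu nu s T)
    (hfin : {p | InShape lam mu p}.Finite) (hlam : AntitoneOn lam (Set.Ici 1)) {i : ℕ}
    (hi : 1 ≤ i) (hmu : ∀ l, i ≤ l → mu l = 0) (t : ℕ) :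
    lam (i + t) ≤ entryCount lam mu T {i} (Set.Iic (s - t)) := by
  refine sub_le_entryCount_singleton (a := 0) hfin fun j hj hjt => ?_
  have hcol : ∀ u ≤ t, InShape lam mu (i + u, j) := fun u hu =>
    ⟨by dsimp only; omega, (hmu (i + u) (by omega)).trans_lt hj,
      hjt.trans (hlam (by simp; omega) (by simp; omega) (by omega))⟩
  exact ⟨hcol 0 t.zero_le,
    Nat.le_sub_of_add_le ((hT.add_le_of_column hcol).trans (hT.le_numSymbols (hcol t le_rfl)))⟩

theorem add_le_add_weight {r m a k : ℕ} (hT : IsLRTableau lam mu nu s T)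
    (hlam : IsPartitionOfLength r lam) (hsm : s ≤ m)
    (htop : ∀ i, 1 ≤ i → i ≤ s → mu i = a) (hbot : ∀ i, m < i → mu i = 0)
    (hnu : MonotoneOn nu (Set.Icc 2 s)) (hk : 2 ≤ k) (hks : k ≤ s) :
    lam k + lam (m + s + 2 - k) ≤ a + nu k := by
  have hfin := hlam.finite_setOf_inShape mu
  have hrow : ∀ j, InShape lam mu (m + 2, j) → 2 ≤ T (m + 2, j) := fun j hj => by
    have habove : InShape lam mu (m + 1, j) :=
      ⟨m.succ_pos, (hbot (m + 1) m.lt_succ_self).trans_lt (Nat.zero_lt_of_lt hj.2.1),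
        hj.2.2.trans (hlam.1 (m + 1) m.succ_pos)⟩
    exact (Nat.succ_le_succ (hT.one_le habove)).trans (hT.2.2.2.1 (m + 1) j habove hj)
  have htopCount : lam k - a ≤ entryCount lam mu T (Set.Iic m) {k} :=
    (hT.sub_le_entryCount_row hfin hlam.antitoneOn (by omega)
      fun i hi hik => htop i hi (hik.trans hks)).trans
    (entryCount_mono hfin (Set.singleton_subset_iff.2 (hks.trans hsm)) subset_rfl)
  have hbotCount : lam (m + s + 2 - k) ≤ entryCount lam mu T (Set.Ioi m) {k} :=
    calc lam (m + s + 2 - k) = lam (m + 2 + (s - k)) := by congr 1; omega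
      _ ≤ entryCount lam mu T {m + 2} (Set.Iic (s - (s - k))) :=
        hT.le_entryCount_row_Iic hfin hlam.antitoneOn (by omega)
          (fun l hl => hbot l (by omega)) (s - k)
      _ = entryCount lam mu T {m + 2} (Set.Iic k) := by rw [Nat.sub_sub_self hks]
      _ ≤ entryCount lam mu T (Set.Ici (m + 2)) {k} :=
        hT.entryCount_singleton_Iic_le hfin one_le_two hrow hnu hk hks
      _ ≤ entryCount lam mu T (Set.Ioi m) {k} :=
        entryCount_mono hfin (Set.Ici_subset_Ioi.2 (by omega)) subset_rfl
  have htotal := entryCount_rows_union (T := T) (K := {k}) hfin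
    (Set.Iic_disjoint_Ioi (le_refl m))
  rw [Set.Iic_union_Ioi, hT.entryCount_univ_singleton (by omega) hks] at htotal
  omega

end IsLRTableau

theorem le_and_exists_isLRTableau_of_LRCoeff_ne_zero {lam mu nu : ℕ → ℕ} {s : ℕ}
    (h : LRCoeff lam mu nu s ≠ 0) : (∀ i, mu i ≤ lam i) ∧ ∃ T, IsLRTableau lam mu nu s T := by
  unfold LRCoeff at h
  split_ifs at h with hsub
  · exact ⟨hsub, Set.nonempty_of_ncard_ne_zero h⟩
  · exact absurd rfl h

theorem lr_spherical_nonzero_implies_ineqs_general {r m n ta c d : ℕ} (hn : 1 ≤ n) (hmn : n ≤ m)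
    {w v lam : ℕ → ℕ}
    (hw_top : ∀ i, 1 ≤ i → i ≤ n → w i = ta) (hw_bot : ∀ i, m < i → w i = 0)
    (hv : ∀ i, 2 ≤ i → i ≤ n → v i + d = c)
    (hlam : IsPartitionOfLength r lam)
    (hpair : ∀ j, 1 ≤ j → j < n → ta + c ≤ lam j + lam (m + n + 1 - j))
    (hne : LRCoeff lam w v n ≠ 0) :
    ta ≤ lam n ∧ ∀ i, 1 ≤ i → i ≤ n - 1 → lam (i + 1) + d ≤ lam i := by
  obtain ⟨hsub, T, hT⟩ := le_and_exists_isLRTableau_of_LRCoeff_ne_zero hne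
  refine ⟨hw_top n hn le_rfl ▸ hsub n, fun i hi hin => ?_⟩
  have hv_mono : MonotoneOn v (Set.Icc 2 n) := fun x hx y hy _ => by
    have := hv x hx.1 hx.2
    have := hv y hy.1 hy.2
    omega
  have hbound := hT.add_le_add_weight hlam hmn hw_top hw_bot hv_mono
    (k := i + 1) (by omega) (by omega)
  have hpair_i := hpair i hi (by omega)
  have hweight := hv (i + 1) (by omega) (by omega)
  rw [show m + n + 2 - (i + 1) = m + n + 1 - i by omega] at hbound
  omega

/-- Converse direction of Lemma (sl): for `m ≥ n ≥ 1`, `ã ≥ a ≥ c ≥ d ≥ 0`,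
`w = (ã, …, ã, a, …, a)` and `v = (c + (n−1)d, c − d, …, c − d)`, if a
partition `λ` of length at most `m + n` satisfies
`λ_j + λ_{m+n+1−j} = ã + c` for `j = 1, …, n` and `λ_{n+j} = a` for
`j = 1, …, m−n`, and the Littlewood–Richardson coefficient `c^λ_{w,v}` is
nonzero, then `λ_n ≥ ã` and `λ_i − λ_{i+1} ≥ d` for `i = 1, …, n−1`. -/
theorem lr_spherical_nonzero_implies_ineqs (m n ta a c d : ℕ) (hn : 1 ≤ n)
    (hmn : n ≤ m) (h1 : a ≤ ta) (h2 : c ≤ a) (h3 : d ≤ c)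
    (w : ℕ → ℕ)
    (hw1 : ∀ i, 1 ≤ i → i ≤ n → w i = ta)
    (hw2 : ∀ i, n < i → i ≤ m → w i = a)
    (hw3 : ∀ i, m < i → w i = 0)
    (v : ℕ → ℕ)
    (hv1 : v 1 = c + (n - 1) * d)
    (hv2 : ∀ i, 2 ≤ i → i ≤ n → v i = c - d)
    (hv3 : ∀ i, n < i → v i = 0)
    (lam : ℕ → ℕ) (hlam : IsPartitionOfLength (m + n) lam)
    (hpair : ∀ j, 1 ≤ j → j ≤ n → lam j + lam (m + n + 1 - j) = ta + c)
    (hmid : ∀ j, 1 ≤ j → j ≤ m - n → lam (n + j) = a)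
    (hne : LRCoeff lam w v n ≠ 0) :
    ta ≤ lam n ∧ ∀ i, 1 ≤ i → i ≤ n - 1 → lam (i + 1) + d ≤ lam i := by
  exact lr_spherical_nonzero_implies_ineqs_general hn hmn hw1 hw3
    (fun i hi hin => by rw [hv2 i hi hin, Nat.sub_add_cancel h3]) hlam
    (fun j hj hjn => (hpair j hj hjn.le).ge) hne
end
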